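/- Let V = V₀ + V₁ where V₀ ∈ L^∞(ℝ) with ess inf V₀ > 0 and V₁ ∈ L¹(ℝ), and let u_a ∈ K_a satisfy I(u_a;V) = min{ I(u;V) : u ∈ K_a }. Then u_a(x) > 0 for all x ∈ ℝ, and, setting J := { x ∈ ℝ : u_a(x) < 1 }, one has u_a ∈ W^{2,1}(J) and u_a″(x) = V(x) u_a(x) for almost every x ∈ J. -/

import Mathlib

open MeasureTheory Filter Real Topology

/-- The supremum norm `‖u‖_∞` of a (bounded continuous) function `u : ℝ → ℝ`. -/
noncomputable def supNorm (u : ℝ → ℝ) : ℝ := ⨆ x : ℝ, |u x|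

/-- `u` is (the continuous representative of) an element of `H¹(ℝ)`:
`u` is continuous, `u ∈ L²(ℝ)`, and there is a weak derivative `u' ∈ L²(ℝ)`,
i.e. `u x = u 0 + ∫_0^x u'`. -/
def IsH1 (u : ℝ → ℝ) : Prop :=
  Continuous u ∧ MemLp u 2 (volume : Measure ℝ) ∧
    ∃ u' : ℝ → ℝ, MemLp u' 2 (volume : Measure ℝ) ∧
      ∀ x : ℝ, u x = u 0 + ∫ t in (0:ℝ)..x, u' t

/-- The Dirichlet energy `∫_ℝ |u'(x)|² dx`.  (For `u ∈ H¹(ℝ)` the classical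
derivative `deriv u` exists a.e. and coincides a.e. with the weak derivative.) -/
noncomputable def energy (u : ℝ → ℝ) : ℝ := ∫ x : ℝ, (deriv u x) ^ 2

/-- `I(u;V) = ∫_ℝ (|u'(x)|² + V(x)|u(x)|²) dx` for a potential `V : ℝ → ℝ`. -/
noncomputable def IV (V : ℝ → ℝ) (u : ℝ → ℝ) : ℝ :=
  ∫ x : ℝ, ((deriv u x) ^ 2 + V x * (u x) ^ 2)

/-- Membership in `K_a = { u ∈ H¹(ℝ) ; u(a) = ‖u‖_∞ = 1 }`. -/
def InKa (a : ℝ) (u : ℝ → ℝ) : Prop := IsH1 u ∧ u a = 1 ∧ supNorm u = 1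

/-- `F(a;V) = inf { I(u;V) ; u ∈ K_a }`. -/
noncomputable def FV (V : ℝ → ℝ) (a : ℝ) : ℝ :=
  sInf {r : ℝ | ∃ u : ℝ → ℝ, InKa a u ∧ r = IV V u}

/-- `m(V) = inf { I(u;V)/‖u‖_∞² ; u ∈ H¹(ℝ), u ≢ 0 }`. -/
noncomputable def mV (V : ℝ → ℝ) : ℝ :=
  sInf {r : ℝ | ∃ u : ℝ → ℝ, IsH1 u ∧ u ≠ 0 ∧ r = IV V u / (supNorm u) ^ 2}

lemma ac_abs {u : ℝ → ℝ} {a b : ℝ} (h : AbsolutelyContinuousOnInterval u a b) :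
    AbsolutelyContinuousOnInterval (fun x => |u x|) a b := by
  refine squeeze_zero (fun t => ?_) (fun t => ?_) h
  · exact Finset.sum_nonneg (fun i hi => dist_nonneg)
  · refine Finset.sum_le_sum fun i hi => ?_
    rw [Real.dist_eq, Real.dist_eq]
    exact abs_abs_sub_abs_le _ _

lemma ac_const (c : ℝ) (a b : ℝ) : AbsolutelyContinuousOnInterval (fun _ : ℝ => c) a b :=
  (LipschitzWith.const (α := ℝ) c).lipschitzOnWith.absolutelyContinuousOnInterval

lemma ac_ae_diff {u : ℝ → ℝ} (h : ∀ a b, AbsolutelyContinuousOnInterval u a b) :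
    ∀ᵐ x, DifferentiableAt ℝ u x := by
  have : ∀ᵐ x, ∀ n : ℕ, x ∈ Set.uIcc (-(n:ℝ)) n → DifferentiableAt ℝ u x :=
    ae_all_iff.2 fun n => (h _ _).ae_differentiableAt
  filter_upwards [this] with x hx
  obtain ⟨n, hn⟩ := exists_nat_ge |x|
  refine hx n ?_
  rw [Set.mem_uIcc]
  left
  exact abs_le.1 hn

lemma li_ii {f : ℝ → ℝ} (hf : LocallyIntegrable f volume) (x y : ℝ) :
    IntervalIntegrable f volume x y :=
  intervalIntegrable_iff.mpr <|
      (hf.integrableOn_isCompact isCompact_uIcc).mono_set Set.uIoc_subset_uIcc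

lemma memLp2_li {f : ℝ → ℝ} (hf : MemLp f 2 (volume : Measure ℝ)) :
    LocallyIntegrable f volume := hf.locallyIntegrable (by norm_num)

lemma ac_prim {f : ℝ → ℝ} (hf : LocallyIntegrable f volume) (c k a b : ℝ) :
    AbsolutelyContinuousOnInterval (fun x => k + ∫ t in c..x, f t) a b := by
  refine (ac_const k a b).fun_add ?_
  have h := (li_ii hf (min a (min b c)) (max a (max b c))).absolutelyContinuousOnInterval_intervalIntegral (c := c)
    (by rw [Set.mem_uIcc]; left; constructor <;> simp)
  refine h.mono ?_
  refine Set.uIcc_subset_uIcc ?_ ?_ <;> (rw [Set.mem_uIcc]; left; constructor <;> simp)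

lemma h1_deriv {u u' : ℝ → ℝ} {k : ℝ} (hu' : LocallyIntegrable u' volume) (c : ℝ)
    (h : ∀ x, u x = k + ∫ t in c..x, u' t) : deriv u =ᵐ[volume] u' := by
  filter_upwards [_root_.LocallyIntegrable.ae_hasDerivAt_integral hu'] with x hx
  have := (hx c).const_add k
  rw [← funext h] at this
  exact this.deriv

lemma IsH1.ac {u : ℝ → ℝ} (h : IsH1 u) (a b : ℝ) : AbsolutelyContinuousOnInterval u a b := by
  obtain ⟨_, _, u', hu', hx⟩ := h
  rw [funext hx]
  exact ac_prim (memLp2_li hu') _ _ _ _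

lemma IsH1.deriv2 {u : ℝ → ℝ} (h : IsH1 u) : MemLp (deriv u) 2 (volume : Measure ℝ) := by
  obtain ⟨_, _, u', hu', hx⟩ := h
  exact (memLp_congr_ae (h1_deriv (memLp2_li hu') 0 hx)).2 hu'

lemma IsH1.mk' {u : ℝ → ℝ} (hc : Continuous u) (h : MemLp u 2 (volume : Measure ℝ))
    (h' : MemLp (deriv u) 2 (volume : Measure ℝ))
    (hac : ∀ a b, AbsolutelyContinuousOnInterval u a b) : IsH1 u := by
  refine ⟨hc, h, deriv u, h', fun x => ?_⟩
  rw [(hac 0 x).integral_deriv_eq_sub]; ring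

lemma IsH1.ftc {u : ℝ → ℝ} (h : IsH1 u) (x y : ℝ) : u y = u x + ∫ t in x..y, deriv u t := by
  rw [(h.ac x y).integral_deriv_eq_sub]; ring

lemma deriv_abs_le {u : ℝ → ℝ} {x : ℝ} (h : DifferentiableAt ℝ u x) :
    |deriv (fun y => |u y|) x| ≤ |deriv u x| := by
  rcases lt_trichotomy (u x) 0 with h0 | h0 | h0
  · have : (fun y => |u y|) =ᶠ[𝓝 x] fun y => - u y := by
      filter_upwards [h.continuousAt.eventually_lt continuousAt_const h0] with y hy
      exact abs_of_neg hy
    rw [this.deriv_eq, deriv.fun_neg, abs_neg]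
  · have : IsLocalMin (fun y => |u y|) x := by
      refine Filter.Eventually.of_forall fun y => ?_
      simp [h0]
    rw [this.deriv_eq_zero]; simp
  · have : (fun y => |u y|) =ᶠ[𝓝 x] u := by
      filter_upwards [continuousAt_const.eventually_lt h.continuousAt h0] with y hy
      exact abs_of_pos hy
    rw [this.deriv_eq]

lemma IsH1.abs {u : ℝ → ℝ} (h : IsH1 u) : IsH1 (fun x => |u x|) := by
  refine IsH1.mk' h.1.abs ?_ ?_ (fun a b => ac_abs (h.ac a b))
  · exact h.2.1.norm
  · refine h.deriv2.mono (measurable_deriv _).aestronglyMeasurable ?_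
    filter_upwards [ac_ae_diff h.ac] with x hx
    exact deriv_abs_le hx

lemma IsH1.comb {u f : ℝ → ℝ} (h : IsH1 u) (hf : IsH1 f) (t : ℝ) :
    IsH1 (fun x => u x + t * f x) ∧
      deriv (fun x => u x + t * f x) =ᵐ[volume] fun x => deriv u x + t * deriv f x := by
  have e : deriv (fun x => u x + t * f x) =ᵐ[volume] fun x => deriv u x + t * deriv f x := by
    filter_upwards [ac_ae_diff h.ac, ac_ae_diff hf.ac] with x hx hx'
    exact (hx.hasDerivAt.add (hx'.hasDerivAt.const_mul t)).deriv
  refine ⟨IsH1.mk' (h.1.add (continuous_const.mul hf.1)) (h.2.1.add (hf.2.1.const_mul t)) ?_ ?_, e⟩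
  · exact (memLp_congr_ae e).2 (h.deriv2.add (hf.deriv2.const_mul t))
  · exact fun a b => (h.ac a b).fun_add ((hf.ac a b).const_mul t)

lemma InKa.le_one {a : ℝ} {u : ℝ → ℝ} (h : InKa a u) (x : ℝ) : |u x| ≤ 1 := by
  obtain ⟨_, _, hs⟩ := h
  unfold supNorm at hs
  have hb : BddAbove (Set.range fun x => |u x|) := by
    by_contra hb
    rw [Real.iSup_of_not_bddAbove hb] at hs
    norm_num at hs
  rw [← hs]
  exact le_ciSup hb x

lemma InKa.mk' {a : ℝ} {u : ℝ → ℝ} (h : IsH1 u) (ha : u a = 1) (hb : ∀ x, |u x| ≤ 1) :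
    InKa a u := by
  refine ⟨h, ha, le_antisymm (ciSup_le hb) ?_⟩
  have := le_ciSup (f := fun x => |u x|) ⟨1, by rintro _ ⟨x, rfl⟩; exact hb x⟩ a
  simpa [supNorm, ha] using this

lemma IsH1.small {u : ℝ → ℝ} (h : IsH1 u) {l : Filter ℝ} {L : ℝ}
    (hl : Tendsto (fun x : ℝ => ∫ t in (0:ℝ)..x, ((u t) ^ 2 + (deriv u t) ^ 2)) l (𝓝 L))
    (hl1 : Tendsto (fun x : ℝ => x + 1) l l) : ∀ᶠ x in l, |u x| < 1 := by
  have hi : Integrable (fun t => (u t) ^ 2 + (deriv u t) ^ 2) volume :=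
    h.2.1.integrable_sq.add h.deriv2.integrable_sq
  have hd := (hl.comp hl1).sub hl
  rw [sub_self] at hd
  filter_upwards [hd.eventually (gt_mem_nhds (show (0:ℝ) < 1/4 by norm_num))] with x hx
  simp only [Function.comp] at hx
  rw [intervalIntegral.integral_interval_sub_left hi.intervalIntegrable hi.intervalIntegrable] at hx
  by_contra hcon
  push Not at hcon
  have i1 : IntervalIntegrable (fun t => (u t) ^ 2) volume x (x+1) :=
    h.2.1.integrable_sq.intervalIntegrable
  have i2 : IntervalIntegrable (fun t => (deriv u t) ^ 2) volume x (x+1) :=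
    h.deriv2.integrable_sq.intervalIntegrable
  have i3 : IntervalIntegrable (fun t => deriv u t) volume x (x+1) :=
    li_ii (memLp2_li h.deriv2) _ _
  rw [intervalIntegral.integral_add i1 i2] at hx
  have p1 : 0 ≤ ∫ t in x..x+1, (u t)^2 :=
    intervalIntegral.integral_nonneg (by linarith) fun t _ => sq_nonneg _
  have p2 : 0 ≤ ∫ t in x..x+1, (deriv u t)^2 :=
    intervalIntegral.integral_nonneg (by linarith) fun t _ => sq_nonneg _
  have key : ∀ y ∈ Set.Icc x (x+1), 1/4 ≤ (u y)^2 := by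
    intro y hy
    have e := h.ftc x y
    have b1 : |∫ t in x..y, deriv u t| ≤ ∫ t in x..y, |deriv u t| :=
      intervalIntegral.abs_integral_le_integral_abs hy.1
    have b2 : ∫ t in x..y, |deriv u t| ≤ ∫ t in x..x+1, |deriv u t| :=
      intervalIntegral.integral_mono_interval le_rfl hy.1 hy.2
        (Filter.Eventually.of_forall fun t => abs_nonneg _) i3.abs
    have b3 : ∫ t in x..x+1, |deriv u t| ≤ ∫ t in x..x+1, (1/4 + (deriv u t)^2) := by
      refine intervalIntegral.integral_mono_on (by linarith) i3.abs
        ((intervalIntegrable_const).add i2) fun t _ => ?_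
      have := sq_abs (deriv u t)
      nlinarith [sq_nonneg (|deriv u t| - 1/2)]
    rw [intervalIntegral.integral_add intervalIntegrable_const i2] at b3
    simp only [intervalIntegral.integral_const, smul_eq_mul] at b3
    have b4 : 1/2 ≤ |u y| := by
      have : |u x| ≤ |u y| + |∫ t in x..y, deriv u t| := by
        have : u x = u y - ∫ t in x..y, deriv u t := by linarith
        rw [this]; exact abs_sub _ _
      linarith
    rw [← sq_abs]; nlinarith
  have : ∫ t in x..x+1, (1/4:ℝ) ≤ ∫ t in x..x+1, (u t)^2 :=
    intervalIntegral.integral_mono_on (by linarith) intervalIntegrable_const i1 key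
  simp only [intervalIntegral.integral_const, smul_eq_mul] at this
  linarith

lemma IsH1.decay {u : ℝ → ℝ} (h : IsH1 u) : ∃ R : ℝ, 0 < R ∧ ∀ x, R ≤ |x| → |u x| < 1 := by
  have hi : Integrable (fun t => (u t) ^ 2 + (deriv u t) ^ 2) volume :=
    h.2.1.integrable_sq.add h.deriv2.integrable_sq
  have h1 := h.small (l := atTop) (intervalIntegral_tendsto_integral_Ioi 0 hi.integrableOn tendsto_id)
    (tendsto_atTop_add_const_right _ _ tendsto_id)
  have h2 : ∀ᶠ x in atBot, |u x| < 1 := by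
    have := (intervalIntegral_tendsto_integral_Iic 0 hi.integrableOn tendsto_id).neg
    refine h.small (l := atBot) (L := -∫ x in Set.Iic 0, (u x ^ 2 + deriv u x ^ 2)) ?_
      (tendsto_atBot_add_const_right _ _ tendsto_id)
    refine this.congr fun x => ?_
    rw [intervalIntegral.integral_symm]; simp
  obtain ⟨A, hA⟩ := eventually_atTop.1 h1
  obtain ⟨B, hB⟩ := eventually_atBot.1 h2
  refine ⟨max 1 (max A (-B)), by positivity, fun x hx => ?_⟩
  have h3 : A ≤ |x| := le_trans (by simp) hx
  have h4 : -B ≤ |x| := le_trans (by simp) hx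
  rcases abs_cases x with ⟨e, _⟩ | ⟨e, _⟩
  · exact hA x (by linarith)
  · exact hB x (by linarith)

lemma intV {V₀ V₁ : ℝ → ℝ} (hV₀ : MemLp V₀ ⊤ (volume : Measure ℝ)) (hV₁ : Integrable V₁ volume)
    {f g : ℝ → ℝ} (hf : IsH1 f) (hg : IsH1 g) {M N : ℝ} (hM : ∀ x, |f x| ≤ M) (hN : ∀ x, |g x| ≤ N) :
    Integrable (fun x => (V₀ x + V₁ x) * (f x * g x)) volume := by
  have h1 : Integrable (fun x => f x * g x) volume := hf.2.1.integrable_mul hg.2.1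
  have h2 : Integrable (fun x => V₀ x * (f x * g x)) volume := by
    have := MemLp.mul (p := ⊤) (q := 1) (r := 1) (memLp_one_iff_integrable.2 h1) hV₀
    exact memLp_one_iff_integrable.1 this
  have h3 : Integrable (fun x => V₁ x * (f x * g x)) volume := by
    refine hV₁.mul_bdd (c := M * N) (hf.1.mul hg.1).aestronglyMeasurable ?_
    refine Filter.Eventually.of_forall fun x => ?_
    rw [norm_mul]
    exact mul_le_mul (hM x) (hN x) (norm_nonneg _) ((abs_nonneg _).trans (hM x))
  refine (h2.add h3).congr (Filter.Eventually.of_forall fun x => ?_)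
  simp only [Pi.add_apply]; ring

lemma Vloc {V₀ V₁ : ℝ → ℝ} (hV₀ : MemLp V₀ ⊤ (volume : Measure ℝ)) (hV₁ : Integrable V₁ volume) :
    LocallyIntegrable (fun x => V₀ x + V₁ x) volume :=
  (hV₀.locallyIntegrable le_top).add hV₁.locallyIntegrable

lemma Vuloc {V u : ℝ → ℝ} (hV : LocallyIntegrable V volume) (hu : Continuous u) :
    LocallyIntegrable (fun x => V x * u x) volume := by
  rw [MeasureTheory.locallyIntegrable_iff] at hV ⊢
  intro K hK
  exact (hV K hK).mul_continuousOn hu.continuousOn hK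

lemma quad_zero {B Q d : ℝ} (hd : 0 < d) (h : ∀ t, |t| ≤ d → 0 ≤ 2 * t * B + t ^ 2 * Q) : B = 0 := by
  by_contra hB
  have hB' : 0 < |B| := abs_pos.2 hB
  obtain ⟨s, hs0, hsd, hsB⟩ : ∃ s : ℝ, 0 < s ∧ s ≤ d ∧ s * (|Q| + 1) ≤ |B| := by
    refine ⟨min d (|B| / (|Q| + 1)), by positivity, min_le_left _ _, ?_⟩
    calc _ ≤ |B| / (|Q| + 1) * (|Q| + 1) := by gcongr; exact min_le_right _ _
      _ = |B| := by field_simp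
  have hQ : s ^ 2 * Q ≤ s ^ 2 * |Q| := by gcongr; exact le_abs_self _
  rcases abs_cases B with ⟨e, _⟩ | ⟨e, _⟩
  · have := h (-s) (by rw [abs_neg, abs_of_pos hs0]; exact hsd)
    nlinarith
  · have := h s (by rw [abs_of_pos hs0]; exact hsd)
    nlinarith

lemma euler {V₀ V₁ : ℝ → ℝ} (hV₀ : MemLp V₀ ⊤ (volume : Measure ℝ)) (hV₁ : Integrable V₁ volume)
    {a : ℝ} {u : ℝ → ℝ} (hu : InKa a u)
    (hmin : ∀ w : ℝ → ℝ, InKa a w →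
      IV (fun x => V₀ x + V₁ x) u ≤ IV (fun x => V₀ x + V₁ x) w)
    {α β : ℝ} (hJ : ∀ x ∈ Set.Icc α β, |u x| < 1)
    {f : ℝ → ℝ} (hf : IsH1 f) (hf0 : ∀ x, x ∉ Set.Icc α β → f x = 0) :
    Integrable (fun x => deriv u x * deriv f x) volume ∧
    Integrable (fun x => (V₀ x + V₁ x) * (u x * f x)) volume ∧
    ∫ x, (deriv u x * deriv f x + (V₀ x + V₁ x) * (u x * f x)) = 0 := by
  obtain ⟨M, hM0, hM⟩ : ∃ M : ℝ, 0 < M ∧ ∀ x, |f x| ≤ M := by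
    obtain ⟨C, hC⟩ := (isCompact_Icc (a := α) (b := β)).exists_bound_of_continuousOn hf.1.continuousOn
    refine ⟨max C 1, by positivity, fun x => ?_⟩
    by_cases hx : x ∈ Set.Icc α β
    · exact (hC x hx).trans (le_max_left _ _)
    · rw [hf0 x hx]; simp
  obtain ⟨δ, hδ0, hδ⟩ : ∃ δ : ℝ, 0 < δ ∧ ∀ x ∈ Set.Icc α β, |u x| ≤ 1 - δ := by
    rcases (Set.Icc α β).eq_empty_or_nonempty with he | hne
    · exact ⟨1, one_pos, by simp [he]⟩
    · obtain ⟨z, hz, hz'⟩ := (isCompact_Icc (a := α) (b := β)).exists_isMaxOn hne hu.1.1.abs.continuousOn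
      refine ⟨1 - |u z|, by linarith [hJ z hz], fun x hx => ?_⟩
      have := hz' hx
      simp only [Set.mem_ofPred_eq] at this
      linarith
  have i1 : Integrable (fun x => deriv u x * deriv f x) volume :=
    hu.1.deriv2.integrable_mul hf.deriv2
  have i2 := intV hV₀ hV₁ hu.1 hf hu.le_one hM
  refine ⟨i1, i2, ?_⟩
  have i3 : Integrable (fun x => deriv u x ^ 2 + (V₀ x + V₁ x) * u x ^ 2) volume := by
    have := intV hV₀ hV₁ hu.1 hu.1 hu.le_one hu.le_one
    refine hu.1.deriv2.integrable_sq.add (this.congr (Filter.Eventually.of_forall fun x => ?_))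
    simp only [sq]
  have i4 : Integrable (fun x => deriv f x ^ 2 + (V₀ x + V₁ x) * f x ^ 2) volume := by
    have := intV hV₀ hV₁ hf hf hM hM
    refine hf.deriv2.integrable_sq.add (this.congr (Filter.Eventually.of_forall fun x => ?_))
    simp only [sq]
  refine quad_zero (Q := ∫ x, (deriv f x ^ 2 + (V₀ x + V₁ x) * f x ^ 2)) (d := δ / M)
    (by positivity) fun t ht => ?_
  have hfa : f a = 0 := hf0 a fun ha => by
    have := hJ a ha
    rw [hu.2.1] at this
    norm_num at this
  have hK : InKa a (fun x => u x + t * f x) := by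
    refine InKa.mk' (hu.1.comb hf t).1 (by simp [hu.2.1, hfa]) fun x => ?_
    by_cases hx : x ∈ Set.Icc α β
    · have h1 : |t * f x| ≤ δ := by
        rw [abs_mul]
        calc |t| * |f x| ≤ δ / M * M := mul_le_mul ht (hM x) (abs_nonneg _) (by positivity)
          _ = δ := by field_simp
      have := abs_add_le (u x) (t * f x)
      have := hδ x hx
      linarith
    · rw [hf0 x hx]; simpa using hu.le_one x
  have key := hmin _ hK
  have e : IV (fun x => V₀ x + V₁ x) (fun x => u x + t * f x) =
      ∫ x, ((deriv u x ^ 2 + (V₀ x + V₁ x) * u x ^ 2) +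
        ((2 * t) * (deriv u x * deriv f x + (V₀ x + V₁ x) * (u x * f x)) +
         t ^ 2 * (deriv f x ^ 2 + (V₀ x + V₁ x) * f x ^ 2))) := by
    unfold IV
    refine integral_congr_ae ?_
    filter_upwards [(hu.1.comb hf t).2] with x hx
    rw [hx]; ring
  have i5 : Integrable (fun x => (2 * t) * (deriv u x * deriv f x + (V₀ x + V₁ x) * (u x * f x)))
    volume := (i1.add i2).const_mul _
  have i6 : Integrable (fun x => t ^ 2 * (deriv f x ^ 2 + (V₀ x + V₁ x) * f x ^ 2)) volume :=
    i4.const_mul _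
  have i7 : Integrable (fun x => (2 * t) * (deriv u x * deriv f x + (V₀ x + V₁ x) * (u x * f x)) +
    t ^ 2 * (deriv f x ^ 2 + (V₀ x + V₁ x) * f x ^ 2)) volume := i5.add i6
  rw [e, integral_add i3 i7, integral_add i5 i6, integral_const_mul, integral_const_mul] at key
  unfold IV at key
  linarith

lemma regular {V₀ V₁ : ℝ → ℝ} (hV₀ : MemLp V₀ ⊤ (volume : Measure ℝ)) (hV₁ : Integrable V₁ volume)
    {a : ℝ} {u : ℝ → ℝ} (hu : InKa a u)
    (hmin : ∀ w : ℝ → ℝ, InKa a w →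
      IV (fun x => V₀ x + V₁ x) u ≤ IV (fun x => V₀ x + V₁ x) w)
    {α β : ℝ} (hαβ : α < β) (hJ : ∀ x ∈ Set.Icc α β, |u x| < 1) :
    ∃ m : ℝ, ∀ x ∈ Set.Ioo α β,
      HasDerivAt u (m + ∫ t in α..x, (V₀ t + V₁ t) * u t) x := by
  set W : ℝ → ℝ := fun x => (V₀ x + V₁ x) * u x with hW
  have hWl : LocallyIntegrable W volume := Vuloc (Vloc hV₀ hV₁) hu.1.1
  set F : ℝ → ℝ := fun x => ∫ t in α..x, W t with hF
  have hFc : Continuous F := intervalIntegral.continuous_primitive (li_ii hWl) α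
  have hdl : LocallyIntegrable (deriv u) volume := memLp2_li hu.1.deriv2
  set m : ℝ := (β - α)⁻¹ * ∫ t in α..β, (deriv u t - F t) with hm
  set g : ℝ → ℝ := fun x => deriv u x - F x - m with hg
  have hgi : IntervalIntegrable g volume α β :=
    ((li_ii hdl _ _).sub (hFc.intervalIntegrable _ _)).sub intervalIntegrable_const
  have hg0 : ∫ t in α..β, g t = 0 := by
    rw [hg, intervalIntegral.integral_sub ((li_ii hdl _ _).sub (hFc.intervalIntegrable _ _))
      intervalIntegrable_const, intervalIntegral.integral_const, hm, smul_eq_mul]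
    have : β - α ≠ 0 := by linarith
    field_simp
    ring
  set ψ : ℝ → ℝ := Set.indicator (Set.Ioc α β) g with hψ
  have hψ2 : MemLp ψ 2 (volume : Measure ℝ) := by
    rw [hψ, memLp_indicator_iff_restrict measurableSet_Ioc]
    obtain ⟨C, hC⟩ := (isCompact_Icc (a := α) (b := β)).exists_bound_of_continuousOn
      (hFc.add (continuous_const (y := m))).continuousOn
    have h1 : MemLp (fun x => F x + m) 2 (volume.restrict (Set.Ioc α β)) := by
      refine MemLp.of_bound (hFc.add continuous_const).aestronglyMeasurable C ?_
      refine ae_restrict_of_forall_mem measurableSet_Ioc fun x hx => ?_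
      exact hC x (Set.Ioc_subset_Icc_self hx)
    have h2 := (hu.1.deriv2.restrict (Set.Ioc α β)).sub h1
    refine (memLp_congr_ae (Filter.Eventually.of_forall fun x => ?_)).1 h2
    simp only [Pi.sub_apply, hg]; ring
  have hψl := memLp2_li hψ2
  set f : ℝ → ℝ := fun x => ∫ t in α..x, ψ t with hf
  have hfc : Continuous f := intervalIntegral.continuous_primitive (li_ii hψl) α
  have hψe : ∫ t in α..β, ψ t = 0 := by
    rw [← hg0]
    refine intervalIntegral.integral_congr_ae (Filter.Eventually.of_forall fun x hx => ?_)
    rw [Set.uIoc_of_le hαβ.le] at hx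
    exact Set.indicator_of_mem hx _
  have hfα : ∀ x, x ≤ α → f x = 0 := by
    intro x hx
    refine (intervalIntegral.integral_congr_ae (g := fun _ => 0)
      (Filter.Eventually.of_forall fun y hy => ?_)).trans (by simp)
    rw [Set.uIoc_of_ge hx] at hy
    exact Set.indicator_of_notMem (fun h => absurd h.1 (not_lt.2 hy.2)) _
  have hfβ : ∀ x, β ≤ x → f x = 0 := by
    intro x hx
    have : ∫ t in β..x, ψ t = 0 := by
      refine (intervalIntegral.integral_congr_ae (g := fun _ => 0)
        (Filter.Eventually.of_forall fun y hy => ?_)).trans (by simp)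
      rw [Set.uIoc_of_le hx] at hy
      exact Set.indicator_of_notMem (fun h => absurd h.2 (not_le.2 hy.1)) _
    rw [hf]
    simp only
    rw [← intervalIntegral.integral_add_adjacent_intervals (li_ii hψl α β) (li_ii hψl β x),
      hψe, this, add_zero]
  have hf0 : ∀ x, x ∉ Set.Ioc α β → f x = 0 := by
    intro x hx
    rcases le_or_gt x α with h | h
    · exact hfα x h
    · exact hfβ x (not_lt.1 fun h' => hx ⟨h, h'.le⟩)
  have hf0' : ∀ x, x ∉ Set.Icc α β → f x = 0 := fun x hx =>
    hf0 x fun h => hx (Set.Ioc_subset_Icc_self h)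
  have hfH : IsH1 f := by
    refine ⟨hfc, hfc.memLp_of_hasCompactSupport (HasCompactSupport.intro isCompact_Icc hf0'),
      ψ, hψ2, fun x => ?_⟩
    exact (intervalIntegral.integral_add_adjacent_intervals (li_ii hψl α 0) (li_ii hψl 0 x)).symm
  have hfd : deriv f =ᵐ[volume] ψ := h1_deriv (k := 0) hψl α fun x => by rw [zero_add]
  have hFd : deriv F =ᵐ[volume] W := h1_deriv (k := 0) hWl α fun x => by rw [zero_add]
  obtain ⟨i1, i2, h0⟩ := euler hV₀ hV₁ hu hmin hJ hfH hf0'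
  rw [integral_add i1 i2] at h0
  have e1 : ∫ x, deriv u x * deriv f x = ∫ x in α..β, deriv u x * g x := by
    rw [intervalIntegral.integral_of_le hαβ.le, ← integral_indicator measurableSet_Ioc]
    refine integral_congr_ae ?_
    filter_upwards [hfd] with x hx
    rw [hx, hψ]
    by_cases h : x ∈ Set.Ioc α β <;> simp [h]
  have e2 : ∫ x, (V₀ x + V₁ x) * (u x * f x) = ∫ x in α..β, deriv F x * f x := by
    rw [intervalIntegral.integral_of_le hαβ.le, ← integral_indicator measurableSet_Ioc]
    refine integral_congr_ae ?_
    filter_upwards [hFd] with x hx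
    by_cases h : x ∈ Set.Ioc α β
    · simp [h, hx, hW]; ring
    · simp [h, hf0 x h]
  have hFac : AbsolutelyContinuousOnInterval F α β := by
    have := ac_prim hWl α 0 α β
    simpa only [zero_add] using this
  have e3 := hFac.integral_mul_deriv_eq_deriv_mul (hfH.ac α β)
  rw [hfα α le_rfl, hfβ β le_rfl] at e3
  have e4 : ∫ x in α..β, F x * deriv f x = ∫ x in α..β, F x * g x := by
    refine intervalIntegral.integral_congr_ae ?_
    filter_upwards [hfd] with x hx hx'
    rw [Set.uIoc_of_le hαβ.le] at hx'
    rw [hx, hψ, Set.indicator_of_mem hx']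
  have j1 : IntervalIntegrable (fun x => deriv u x * g x) volume α β := by
    rw [intervalIntegrable_iff_integrableOn_Ioc_of_le hαβ.le]
    refine (i1.integrableOn (s := Set.Ioc α β)).congr ?_
    filter_upwards [ae_restrict_of_ae hfd, ae_restrict_mem measurableSet_Ioc] with x hx hx'
    rw [hx, hψ, Set.indicator_of_mem hx']
  have j2 : IntervalIntegrable (fun x => F x * g x) volume α β :=
    hgi.continuousOn_mul hFc.continuousOn
  have j3 : IntervalIntegrable (fun x => m * g x) volume α β := hgi.const_mul m
  have e5 : ∫ x in α..β, g x * g x = 0 := by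
    have : (fun x => g x * g x) = fun x => (deriv u x * g x - F x * g x) - m * g x := by
      funext x; simp only [hg]; ring
    rw [this, intervalIntegral.integral_sub (j1.sub j2) j3, intervalIntegral.integral_sub j1 j2,
      intervalIntegral.integral_const_mul, hg0]
    linarith
  have j4 : IntervalIntegrable (fun x => g x * g x) volume α β := by
    have : (fun x => g x * g x) = fun x => (deriv u x * g x - F x * g x) - m * g x := by
      funext x; simp only [hg]; ring
    rw [this]
    exact (j1.sub j2).sub j3
  rw [intervalIntegral.integral_eq_zero_iff_of_le_of_nonneg_ae hαβ.le
    (Filter.Eventually.of_forall fun x => mul_self_nonneg _) j4] at e5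
  have e6 : ∀ᵐ x, x ∈ Set.Ioc α β → deriv u x = m + F x := by
    rw [← ae_restrict_iff' measurableSet_Ioc]
    filter_upwards [e5] with x hx
    have : g x = 0 := by simpa using hx
    simp only [hg] at this
    linarith
  have e7 : ∀ x ∈ Set.Icc α β, u x = u α + ∫ t in α..x, (m + F t) := by
    intro x hx
    rw [hu.1.ftc α x]
    congr 1
    refine intervalIntegral.integral_congr_ae ?_
    filter_upwards [e6] with y hy hy'
    rw [Set.uIoc_of_le hx.1] at hy'
    exact hy ⟨hy'.1, hy'.2.trans hx.2⟩
  refine ⟨m, fun x hx => ?_⟩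
  have hd := ((continuous_const (y := m)).add hFc).integral_hasStrictDerivAt α x
  refine (hd.hasDerivAt.const_add (u α)).congr_of_eventuallyEq ?_
  filter_upwards [Ioo_mem_nhds hx.1 hx.2] with y hy
  exact e7 y (Set.Ioo_subset_Icc_self hy)

lemma regular' {V₀ V₁ : ℝ → ℝ} (hV₀ : MemLp V₀ ⊤ (volume : Measure ℝ)) (hV₁ : Integrable V₁ volume)
    {a : ℝ} {u : ℝ → ℝ} (hu : InKa a u)
    (hmin : ∀ w : ℝ → ℝ, InKa a w →
      IV (fun x => V₀ x + V₁ x) u ≤ IV (fun x => V₀ x + V₁ x) w)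
    {x y : ℝ} (hJ : ∀ z ∈ Set.uIcc x y, |u z| < 1) :
    DifferentiableAt ℝ u x ∧
    deriv u y = deriv u x + ∫ t in x..y, (V₀ t + V₁ t) * u t := by
  have hWl : LocallyIntegrable (fun x => (V₀ x + V₁ x) * u x) volume :=
    Vuloc (Vloc hV₀ hV₁) hu.1.1
  have ho : IsOpen {z | |u z| < 1} := isOpen_lt hu.1.1.abs continuous_const
  have h1 : ∃ α < min x y, ∀ z ∈ Set.Icc α (min x y), |u z| < 1 := by
    have hm : min x y ∈ {z | |u z| < 1} := hJ _ (by
      rw [Set.mem_uIcc]; rcases le_total x y with h | h <;> simp [h])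
    obtain ⟨e, he, hb⟩ := Metric.isOpen_iff.1 ho _ hm
    refine ⟨min x y - e / 2, by linarith, fun z hz => hb ?_⟩
    rw [Metric.mem_ball, Real.dist_eq, abs_lt]
    constructor <;> linarith [hz.1, hz.2]
  have h2 : ∃ β > max x y, ∀ z ∈ Set.Icc (max x y) β, |u z| < 1 := by
    have hm : max x y ∈ {z | |u z| < 1} := hJ _ (by
      rw [Set.mem_uIcc]; rcases le_total x y with h | h <;> simp [h])
    obtain ⟨e, he, hb⟩ := Metric.isOpen_iff.1 ho _ hm
    refine ⟨max x y + e / 2, by linarith, fun z hz => hb ?_⟩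
    rw [Metric.mem_ball, Real.dist_eq, abs_lt]
    constructor <;> linarith [hz.1, hz.2]
  obtain ⟨α, hα, hα'⟩ := h1
  obtain ⟨β, hβ, hβ'⟩ := h2
  have hx : x ∈ Set.Ioo α β :=
    ⟨hα.trans_le (min_le_left _ _), (le_max_left _ _).trans_lt hβ⟩
  have hy : y ∈ Set.Ioo α β :=
    ⟨hα.trans_le (min_le_right _ _), (le_max_right _ _).trans_lt hβ⟩
  obtain ⟨m, hm⟩ := regular hV₀ hV₁ hu hmin (hx.1.trans hx.2) (fun z hz => by
    rcases le_total z (min x y) with h | h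
    · exact hα' z ⟨hz.1, h⟩
    rcases le_total (max x y) z with h' | h'
    · exact hβ' z ⟨h', hz.2⟩
    exact hJ z ⟨h, h'⟩)
  refine ⟨(hm x hx).differentiableAt, ?_⟩
  rw [(hm x hx).deriv, (hm y hy).deriv, add_assoc,
    intervalIntegral.integral_add_adjacent_intervals (li_ii hWl _ _) (li_ii hWl _ _)]

lemma positive {V₀ V₁ : ℝ → ℝ} (hV₀ : MemLp V₀ ⊤ (volume : Measure ℝ)) (hV₁ : Integrable V₁ volume)
    {a : ℝ} {u : ℝ → ℝ} (hu : InKa a u) (hu0 : ∀ x, 0 ≤ u x)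
    (hmin : ∀ w : ℝ → ℝ, InKa a w →
      IV (fun x => V₀ x + V₁ x) u ≤ IV (fun x => V₀ x + V₁ x) w) (x : ℝ) : 0 < u x := by
  have hVl := Vloc hV₀ hV₁
  have ho : IsOpen {z | |u z| < 1} := isOpen_lt hu.1.1.abs continuous_const
  have hcl : IsClosed {z | u z = 0} := isClosed_eq hu.1.1 continuous_const
  have hop : IsOpen {z | u z = 0} := by
    rw [Metric.isOpen_iff]
    intro x₀ hx₀
    change u x₀ = 0 at hx₀
    obtain ⟨e, he, hb⟩ := Metric.isOpen_iff.1 ho x₀ (by simp [hx₀])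
    set M : ℝ := ∫ t in (x₀ - 1)..(x₀ + 1), |V₀ t + V₁ t| with hM
    have hM0 : 0 ≤ M := intervalIntegral.integral_nonneg (by linarith) fun t _ => abs_nonneg _
    obtain ⟨h, hh0, hhe, hh1, hhM⟩ : ∃ h : ℝ, 0 < h ∧ h < e ∧ h ≤ 1 ∧ h * (M + 1) ≤ 1 / 2 := by
      refine ⟨min (e / 2) (min 1 (1 / (2 * (M + 1)))), by positivity, ?_, ?_, ?_⟩
      · exact (min_le_left _ _).trans_lt (by linarith)
      · exact (min_le_right _ _).trans (min_le_left _ _)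
      · calc _ ≤ 1 / (2 * (M + 1)) * (M + 1) := by
              gcongr; exact (min_le_right _ _).trans (min_le_right _ _)
          _ = 1 / 2 := by field_simp
    have hsub : ∀ z ∈ Set.Icc (x₀ - h) (x₀ + h), |u z| < 1 := fun z hz => hb (by
      rw [Metric.mem_ball, Real.dist_eq, abs_lt]; constructor <;> linarith [hz.1, hz.2])
    have hx₀m : x₀ ∈ Set.Icc (x₀ - h) (x₀ + h) := ⟨by linarith, by linarith⟩
    obtain ⟨y, hy, hymax⟩ := (isCompact_Icc (a := x₀ - h) (b := x₀ + h)).exists_isMaxOn ⟨x₀, hx₀m⟩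
      hu.1.1.continuousOn
    have hmax : ∀ z ∈ Set.Icc (x₀ - h) (x₀ + h), u z ≤ u y := fun z hz => hymax hz
    have hd0 : deriv u x₀ = 0 := by
      have : IsLocalMin u x₀ := Filter.Eventually.of_forall fun z => by rw [hx₀]; exact hu0 z
      exact this.deriv_eq_zero
    have hd : ∀ z ∈ Set.Icc (x₀ - h) (x₀ + h), |deriv u z| ≤ u y * M := by
      intro z hz
      have hs := Set.uIcc_subset_Icc hx₀m hz
      rw [(regular' hV₀ hV₁ hu hmin (x := x₀) (y := z) fun w hw => hsub w (hs hw)).2, hd0, zero_add]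
      have hb1 : |∫ t in x₀..z, (V₀ t + V₁ t) * u t| ≤ |∫ t in x₀..z, |V₀ t + V₁ t| * u y| := by
        rw [← Real.norm_eq_abs]
        refine intervalIntegral.norm_integral_le_abs_of_norm_le
          (ae_restrict_of_forall_mem measurableSet_uIoc fun t ht => ?_)
          ((li_ii hVl _ _).abs.mul_const _)
        have ht' := hs (Set.uIoc_subset_uIcc ht)
        rw [norm_mul, Real.norm_eq_abs, Real.norm_eq_abs, abs_of_nonneg (hu0 t)]
        exact mul_le_mul_of_nonneg_left (hmax t ht') (abs_nonneg _)
      refine hb1.trans ?_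
      rw [intervalIntegral.integral_mul_const, abs_mul, abs_of_nonneg (hu0 y), mul_comm]
      refine mul_le_mul_of_nonneg_left ?_ (hu0 y)
      rw [← abs_of_nonneg hM0]
      refine intervalIntegral.abs_integral_mono_interval ?_ (Filter.Eventually.of_forall fun t => abs_nonneg _)
        (li_ii hVl _ _).abs
      rw [Set.uIoc_of_le (a := x₀ - 1) (by linarith)]
      intro w hw
      rw [Set.mem_uIoc] at hw
      rcases hw with hw | hw <;> constructor <;> linarith [hw.1, hw.2, hz.1, hz.2]
    have hy0 : u y ≤ 0 := by
      have e1 := hu.1.ftc x₀ y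
      rw [hx₀, zero_add] at e1
      have : |∫ t in x₀..y, deriv u t| ≤ u y * M * |y - x₀| := by
        rw [← Real.norm_eq_abs]
        refine intervalIntegral.norm_integral_le_of_norm_le_const fun t ht => ?_
        exact hd t (Set.uIcc_subset_Icc hx₀m hy (Set.uIoc_subset_uIcc ht))
      rw [← e1] at this
      have h3 : |y - x₀| ≤ h := abs_le.2 ⟨by linarith [hy.1], by linarith [hy.2]⟩
      have h4 := le_abs_self (u y)
      have h5 : u y * M * |y - x₀| ≤ u y * M * h :=
        mul_le_mul_of_nonneg_left h3 (mul_nonneg (hu0 y) hM0)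
      nlinarith [hu0 y, mul_le_mul_of_nonneg_left hhM (hu0 y), mul_nonneg (hu0 y) hh0.le]
    refine ⟨h, hh0, fun z hz => ?_⟩
    rw [Metric.mem_ball, Real.dist_eq, abs_lt] at hz
    exact le_antisymm ((hmax z ⟨by linarith, by linarith⟩).trans hy0) (hu0 z)
  rcases isClopen_iff.1 ⟨hcl, hop⟩ with h | h
  · refine lt_of_le_of_ne (hu0 x) fun h' => ?_
    have : x ∈ {z | u z = 0} := h'.symm
    rw [h] at this
    exact this
  · have : a ∈ {z | u z = 0} := by rw [h]; trivial
    have h1 : u a = 0 := this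
    rw [hu.2.1] at h1
    norm_num at h1

lemma halfline {u p V₀ V₁ : ℝ → ℝ} {R c : ℝ} (hc : 0 < c) (hu0 : ∀ x, 0 ≤ u x)
    (hu1 : ∀ x, u x ≤ 1) (huc : Continuous u) (hp : MemLp p 2 (volume : Measure ℝ))
    (hV₁ : Integrable V₁ volume) (hV₀ : ∀ᵐ x, c ≤ V₀ x)
    (hVl : LocallyIntegrable (fun x => V₀ x + V₁ x) volume)
    (h1 : ∀ x, R ≤ x → u x = u R + ∫ t in R..x, p t)
    (h2 : ∀ x, R ≤ x → p x = p R + ∫ t in R..x, (V₀ t + V₁ t) * u t) :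
    IntegrableOn u (Set.Ioi R) volume ∧ IntegrableOn p (Set.Ioi R) volume := by
  have hWl := Vuloc hVl huc
  have hpl := memLp2_li hp
  set k : ℝ := √c with hk
  have hk0 : 0 < k := Real.sqrt_pos.2 hc
  have hkk : k * k = c := Real.mul_self_sqrt hc.le
  set q : ℝ → ℝ := fun x => (p R + ∫ t in R..x, (V₀ t + V₁ t) * u t) + k * (u R + ∫ t in R..x, p t)
    with hq
  have hqe : ∀ x, R ≤ x → q x = p x + k * u x := fun x hx => by
    simp only [hq]; rw [← h1 x hx, ← h2 x hx]
  have hqac : ∀ a b, AbsolutelyContinuousOnInterval q a b := fun a b =>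
    (ac_prim hWl R (p R) a b).fun_add ((ac_prim hpl R (u R) a b).const_mul k)
  set Q : ℝ → ℝ := fun x => (1/2) * (q x + |q x|) with hQ
  have hQac : ∀ a b, AbsolutelyContinuousOnInterval Q a b := fun a b =>
    ((hqac a b).fun_add (ac_abs (hqac a b))).const_mul _
  have hQ0 : ∀ x, 0 ≤ Q x := fun x => by
    simp only [hQ]; linarith [neg_abs_le (q x)]
  have hqQ : ∀ x, q x ≤ Q x := fun x => by
    simp only [hQ]; linarith [le_abs_self (q x)]
  have hQc : ∀ a b, IntervalIntegrable Q volume a b := fun a b =>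
    (hQac a b).continuousOn.intervalIntegrable
  have hqd : ∀ᵐ x, HasDerivAt q ((V₀ x + V₁ x) * u x + k * p x) x := by
    filter_upwards [_root_.LocallyIntegrable.ae_hasDerivAt_integral hWl,
      _root_.LocallyIntegrable.ae_hasDerivAt_integral hpl] with x hx hx'
    exact ((hx R).const_add (p R)).add (((hx' R).const_add (u R)).const_mul k)
  have hQd : ∀ᵐ x, R ≤ x → k * Q x - |V₁ x| ≤ deriv Q x := by
    filter_upwards [hqd, hV₀] with x hx hV hRx
    rcases lt_trichotomy (q x) 0 with h0 | h0 | h0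
    · have : Q =ᶠ[𝓝 x] fun _ => 0 := by
        filter_upwards [hx.continuousAt.eventually_lt continuousAt_const h0] with y hy
        simp only [hQ]; rw [abs_of_neg hy]; ring
      rw [this.deriv_eq, this.eq_of_nhds]
      simp
    · have hQx : Q x = 0 := by simp [hQ, h0]
      have : IsLocalMin Q x := Filter.Eventually.of_forall fun y => by rw [hQx]; exact hQ0 y
      rw [this.deriv_eq_zero, hQx]; simp
    · have : Q =ᶠ[𝓝 x] q := by
        filter_upwards [continuousAt_const.eventually_lt hx.continuousAt h0] with y hy
        simp only [hQ]; rw [abs_of_pos hy]; ring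
      rw [this.deriv_eq, this.eq_of_nhds, hx.deriv, hqe x hRx]
      have a1 : c * u x ≤ V₀ x * u x := mul_le_mul_of_nonneg_right hV (hu0 x)
      have a2 : -|V₁ x| ≤ V₁ x * u x := by
        have : |V₁ x * u x| ≤ |V₁ x| := by
          rw [abs_mul, abs_of_nonneg (hu0 x)]
          exact mul_le_of_le_one_right (abs_nonneg _) (hu1 x)
        exact neg_le_of_abs_le this
      have a3 : k * (p x + k * u x) = k * p x + c * u x := by rw [← hkk]; ring
      rw [a3]
      linarith
  have hX : ∀ n : ℕ, ∃ X : ℝ, max R n ≤ X ∧ |p X| ≤ 1 := by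
    intro n
    by_contra hcon
    push Not at hcon
    have hi : IntegrableOn (fun x => (p x) ^ 2) (Set.Ioi (max R n)) volume :=
      hp.integrable_sq.integrableOn
    have : IntegrableOn (fun _ : ℝ => (1:ℝ)) (Set.Ioi (max R (n:ℝ))) volume := by
      refine Integrable.mono hi aestronglyMeasurable_const ?_
      refine ae_restrict_of_forall_mem measurableSet_Ioi fun x hx => ?_
      have := hcon x (le_of_lt hx)
      rw [norm_one, Real.norm_eq_abs, abs_pow]
      nlinarith
    rw [integrableOn_const_iff] at this
    simp at this
  choose X hX1 hX2 using hX
  have hXR : ∀ n, R ≤ X n := fun n => (le_max_left _ _).trans (hX1 n)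
  have hXt : Tendsto X atTop atTop :=
    tendsto_atTop_mono (fun n => (le_max_right _ _).trans (hX1 n)) tendsto_natCast_atTop_atTop
  set B : ℝ := (1 + k + ∫ x, |V₁ x|) / k with hB
  have hQB : ∀ n, ∫ x in R..X n, Q x ≤ B := by
    intro n
    have e1 := (hQac R (X n)).integral_deriv_eq_sub
    have e2 : ∫ x in R..X n, (k * Q x - |V₁ x|) ≤ ∫ x in R..X n, deriv Q x := by
      refine intervalIntegral.integral_mono_ae_restrict (hXR n)
        (((hQc _ _).const_mul k).sub hV₁.intervalIntegrable.abs)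
        (hQac R (X n)).intervalIntegrable_deriv ?_
      filter_upwards [ae_restrict_of_ae hQd, ae_restrict_mem measurableSet_Icc] with x hx hx'
      exact hx hx'.1
    rw [intervalIntegral.integral_sub ((hQc _ _).const_mul k) hV₁.intervalIntegrable.abs,
      intervalIntegral.integral_const_mul] at e2
    have e3 : ∫ x in R..X n, |V₁ x| ≤ ∫ x, |V₁ x| := by
      rw [intervalIntegral.integral_of_le (hXR n)]
      exact setIntegral_le_integral hV₁.abs (Filter.Eventually.of_forall fun x => abs_nonneg _)
    have e4 : Q (X n) ≤ 1 + k := by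
      have : |q (X n)| ≤ 1 + k := by
        rw [hqe _ (hXR n)]
        refine (abs_add_le _ _).trans (add_le_add (hX2 n) ?_)
        rw [abs_of_nonneg (mul_nonneg hk0.le (hu0 _))]
        exact mul_le_of_le_one_right hk0.le (hu1 _)
      simp only [hQ]; linarith [le_abs_self (q (X n))]
    rw [hB, le_div_iff₀ hk0]
    linarith [hQ0 R]
  have hpb : ∀ n, |∫ x in R..X n, p x| ≤ 1 := fun n => by
    have := h1 _ (hXR n)
    rw [show ∫ x in R..X n, p x = u (X n) - u R by linarith, abs_le]
    constructor <;> linarith [hu0 (X n), hu0 R, hu1 (X n), hu1 R]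
  constructor
  · refine integrableOn_Ioi_of_intervalIntegral_norm_bounded ((B + 1) / k) R
      (fun n => (huc.integrableOn_Ioc)) hXt (Filter.Eventually.of_forall fun n => ?_)
    rw [le_div_iff₀ hk0, ← intervalIntegral.integral_mul_const]
    have : ∫ x in R..X n, ‖u x‖ * k ≤ ∫ x in R..X n, (Q x - p x) := by
      refine intervalIntegral.integral_mono_on (hXR n) ((huc.norm.mul continuous_const).intervalIntegrable _ _)
        ((hQc _ _).sub (li_ii hpl _ _)) fun x hx => ?_
      rw [Real.norm_eq_abs, abs_of_nonneg (hu0 x)]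
      linarith [hqQ x, hqe x hx.1]
    rw [intervalIntegral.integral_sub (hQc _ _) (li_ii hpl _ _)] at this
    linarith [hQB n, (abs_le.1 (hpb n)).1]
  · refine integrableOn_Ioi_of_intervalIntegral_norm_bounded (2 * B + 1) R
      (fun n => (li_ii hpl _ _).1) hXt (Filter.Eventually.of_forall fun n => ?_)
    have : ∫ x in R..X n, ‖p x‖ ≤ ∫ x in R..X n, (2 * Q x - p x) := by
      refine intervalIntegral.integral_mono_on (hXR n) (li_ii hpl _ _).norm
        (((hQc _ _).const_mul 2).sub (li_ii hpl _ _)) fun x hx => ?_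
      have a1 := hqQ x
      rw [hqe x hx.1] at a1
      have a2 := hQ0 x
      have a3 := mul_nonneg hk0.le (hu0 x)
      rw [Real.norm_eq_abs]
      rcases abs_cases (p x) with ⟨e, _⟩ | ⟨e, _⟩ <;> linarith
    rw [intervalIntegral.integral_sub ((hQc _ _).const_mul 2) (li_ii hpl _ _),
      intervalIntegral.integral_const_mul] at this
    linarith [hQB n, (abs_le.1 (hpb n)).1]

lemma int_of_tails {f : ℝ → ℝ} {R : ℝ} (hl : LocallyIntegrable f volume)
    (h1 : IntegrableOn f (Set.Ioi R) volume)
    (h2 : IntegrableOn (fun x => f (-x)) (Set.Ioi R) volume) : Integrable f volume := by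
  have h3 : IntegrableOn f (Set.Iio (-R)) volume := by
    have := (Measure.measurePreserving_neg (volume : Measure ℝ)).integrableOn_comp_preimage
      (Homeomorph.neg ℝ).measurableEmbedding (f := f) (s := Set.Iio (-R))
    rw [← this]
    simpa [Function.comp_def] using h2
  have h4 : IntegrableOn f (Set.Icc (-R) R) volume := hl.integrableOn_isCompact isCompact_Icc
  rw [← integrableOn_univ]
  refine ((h3.union h4).union h1).mono_set fun x _ => ?_
  rcases lt_or_ge x (-R) with h | h
  · exact Or.inl (Or.inl h)
  rcases le_or_gt x R with h' | h'
  · exact Or.inl (Or.inr ⟨h, h'⟩)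
  · exact Or.inr h'

/-- **Positivity and interior regularity of the minimizer.** Let `V = V₀ + V₁` with
`V₀ ∈ L^∞(ℝ)`, `ess inf V₀ > 0`, `V₁ ∈ L¹(ℝ)`, and let `u_a ∈ K_a` minimize `I(·;V)` over
`K_a`.  Then `u_a > 0` on `ℝ`, and on the open set `J = { x ; u_a(x) < 1 }` we have
`u_a ∈ W^{2,1}(J)` with `u_a'' = V u_a` a.e. on `J`: there are `v, w ∈ L¹(J)` such that
`u_a ∈ L¹(J)`, `u_a` is a primitive of `v` and `v` a primitive of `w` on every interval
contained in `J`, and `w = V·u_a` a.e. on `J`. -/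
theorem minimizer_positive_and_W21 (V₀ : ℝ → ℝ) (hV₀ : MemLp V₀ ⊤ (volume : Measure ℝ))
    (hpos : 0 < essInf V₀ (volume : Measure ℝ))
    (V₁ : ℝ → ℝ) (hV₁ : Integrable V₁ (volume : Measure ℝ))
    (a : ℝ) (ua : ℝ → ℝ) (hua : InKa a ua)
    (hmin : ∀ u : ℝ → ℝ, InKa a u →
      IV (fun x => V₀ x + V₁ x) ua ≤ IV (fun x => V₀ x + V₁ x) u) :
    (∀ x : ℝ, 0 < ua x) ∧
      ∃ v w : ℝ → ℝ,
        IntegrableOn ua {x : ℝ | ua x < 1} (volume : Measure ℝ) ∧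
        IntegrableOn v {x : ℝ | ua x < 1} (volume : Measure ℝ) ∧
        IntegrableOn w {x : ℝ | ua x < 1} (volume : Measure ℝ) ∧
        (∀ x y : ℝ, x ∈ {x : ℝ | ua x < 1} → y ∈ {x : ℝ | ua x < 1} →
          Set.uIcc x y ⊆ {x : ℝ | ua x < 1} →
            ua y = ua x + ∫ t in x..y, v t ∧ v y = v x + ∫ t in x..y, w t) ∧
        (∀ᵐ x : ℝ, x ∈ {x : ℝ | ua x < 1} → w x = (V₀ x + V₁ x) * ua x) := by
  have hmin' : ∀ w : ℝ → ℝ, InKa a w →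
      IV (fun x => V₀ x + V₁ x) (fun x => |ua x|) ≤ IV (fun x => V₀ x + V₁ x) w := by
    intro w hw
    refine le_trans ?_ (hmin w hw)
    unfold IV
    have i1 := intV hV₀ hV₁ hua.1 hua.1 hua.le_one hua.le_one
    have i2 : Integrable (fun x => (V₀ x + V₁ x) * ua x ^ 2) volume := by
      refine i1.congr (Filter.Eventually.of_forall fun x => ?_)
      simp only [sq]
    simp only [sq_abs]
    refine integral_mono_ae (hua.1.abs.deriv2.integrable_sq.add i2)
      (hua.1.deriv2.integrable_sq.add i2) ?_
    filter_upwards [ac_ae_diff hua.1.ac] with x hx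
    have := sq_le_sq.2 (deriv_abs_le hx)
    linarith
  have hKabs : InKa a (fun x => |ua x|) :=
    InKa.mk' hua.1.abs (by simp [hua.2.1]) (fun x => by rw [abs_abs]; exact hua.le_one x)
  have hne : ∀ x, ua x ≠ 0 := fun x =>
    abs_pos.1 (positive hV₀ hV₁ hKabs (fun x => abs_nonneg _) hmin' x)
  have hp : ∀ x, 0 < ua x := by
    intro x
    by_contra hx
    push Not at hx
    have := intermediate_value_univ x a hua.1.1 (show (0:ℝ) ∈ Set.Icc (ua x) (ua a) from
      ⟨hx, by rw [hua.2.1]; norm_num⟩)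
    obtain ⟨y, hy⟩ := this
    exact hne y hy
  have hle : ∀ x, ua x ≤ 1 := fun x => (le_abs_self _).trans (hua.le_one x)
  have hsub : ∀ x, ua x < 1 → |ua x| < 1 := fun x hx => by rwa [abs_of_pos (hp x)]
  obtain ⟨R, hR0, hR⟩ := hua.1.decay
  have hd2 := hua.1.deriv2
  have hVl := Vloc hV₀ hV₁
  have hae : ∀ᵐ x, essInf V₀ volume ≤ V₀ x := by
    refine ae_essInf_le ?_
    refine ⟨-(eLpNormEssSup V₀ volume).toReal, ?_⟩
    rw [Filter.eventually_map]
    filter_upwards [ae_le_eLpNormEssSup (f := V₀) (μ := volume)] with x hx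
    have hfin : eLpNormEssSup V₀ volume ≠ ⊤ := by
      have := hV₀.2
      rw [eLpNorm_exponent_top] at this
      exact this.ne
    have := ENNReal.toReal_mono hfin hx
    rw [toReal_enorm, Real.norm_eq_abs] at this
    exact neg_le_of_abs_le this
  have hright := halfline (u := ua) (p := deriv ua) (R := R) hpos (fun x => (hp x).le) hle hua.1.1
    hd2 hV₁ hae hVl (fun x hx => hua.1.ftc R x)
    (fun x hx => (regular' hV₀ hV₁ hua hmin fun z hz => hR z (by
      rw [Set.uIcc_of_le hx] at hz
      exact hz.1.trans (le_abs_self _))).2)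
  have mp := Measure.measurePreserving_neg (volume : Measure ℝ)
  have hleft := halfline (u := fun x => ua (-x)) (p := fun x => - deriv ua (-x)) (R := R)
    (V₀ := fun x => V₀ (-x)) (V₁ := fun x => V₁ (-x)) hpos
    (fun x => (hp _).le) (fun x => hle _) (hua.1.1.comp continuous_neg)
    (hd2.comp_measurePreserving mp).neg hV₁.comp_neg
    (mp.quasiMeasurePreserving.ae hae)
    (Vloc (hV₀.comp_measurePreserving mp) hV₁.comp_neg)
    (fun x hx => by
      have e := hua.1.ftc (-x) (-R)
      rw [intervalIntegral.integral_neg, intervalIntegral.integral_comp_neg (fun t => deriv ua t)]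
      linarith)
    (fun x hx => by
      have e := (regular' hV₀ hV₁ hua hmin (x := -x) (y := -R) fun z hz => hR z (by
        rw [Set.uIcc_of_le (by linarith)] at hz
        exact (le_neg.2 hz.2).trans (neg_le_abs _))).2
      rw [intervalIntegral.integral_comp_neg (fun t => (V₀ t + V₁ t) * ua t)]
      linarith)
  have iu : Integrable ua volume :=
    int_of_tails hua.1.1.locallyIntegrable hright.1 hleft.1
  have iv : Integrable (deriv ua) volume := by
    refine int_of_tails (memLp2_li hd2) hright.2 ?_
    simpa using hleft.2.neg
  have iw : Integrable (fun x => (V₀ x + V₁ x) * ua x) volume := by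
    have h2 : Integrable (fun x => V₀ x * ua x) volume := by
      have := MemLp.mul (p := ⊤) (q := 1) (r := 1) (memLp_one_iff_integrable.2 iu) hV₀
      exact memLp_one_iff_integrable.1 this
    have h3 : Integrable (fun x => V₁ x * ua x) volume :=
      hV₁.mul_bdd (c := 1) hua.1.1.aestronglyMeasurable
        (Filter.Eventually.of_forall fun x => hua.le_one x)
    refine (h2.add h3).congr (Filter.Eventually.of_forall fun x => ?_)
    simp only [Pi.add_apply]; ring
  refine ⟨hp, deriv ua, fun x => (V₀ x + V₁ x) * ua x, iu.integrableOn, iv.integrableOn,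
    iw.integrableOn, fun x y _ _ hxy => ⟨hua.1.ftc x y, ?_⟩, Filter.Eventually.of_forall fun x _ => rfl⟩
  exact (regular' hV₀ hV₁ hua hmin fun z hz => hsub z (hxy hz)).2
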